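/- arXiv:2511.06690 — 5 statements merged into one kernel-verified Lean document; each statement's English description precedes it below -/
import Mathlib

section
/- Fix 2 < p < ∞. The natural embedding E : ℓ² → ℓ^p, which maps each square-summable real sequence to itself regarded as an element of ℓ^p, is a well-defined injective bounded linear operator that is strictly singular and not compact. -/
open scoped ENNReal

/-- A bounded linear operator is strictly singular if its restriction to any
infinite-dimensional closed subspace of the domain is not bounded below. -/
def StrictlySingular {X Y : Type*} [NormedAddCommGroup X] [NormedSpace ℝ X]
    [NormedAddCommGroup Y] [NormedSpace ℝ Y] (A : X →L[ℝ] Y) : Prop :=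
  ∀ Z : Submodule ℝ X, IsClosed (Z : Set X) → ¬ FiniteDimensional ℝ Z →
    ¬ ∃ c : ℝ, 0 < c ∧ ∀ z ∈ Z, c * ‖z‖ ≤ ‖A z‖

/-!
For `q < p` the interpolation inequality `‖x‖_p ≤ ‖x‖_∞ ^ (1 - q / p) * ‖x‖_q ^ (q / p)` shows that
a subspace `Z` of `ℓ^q` on which the `ℓ^p` norm dominates the `ℓ^q` norm is one on which already
the sup norm dominates it. If `Z` is infinite-dimensional this is impossible: a gliding hump
argument produces, for every `n`, an element of `Z` with sup norm at most `3` and at least `n`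
coordinates of norm at least `1`. Noncompactness is witnessed by the unit coordinate vectors, whose
mutual distances in `ℓ^p` are at least `1`.
-/

open Filter Topology

section LpSpaces

variable {ι : Type*} {E : ι → Type*} [∀ i, NormedAddCommGroup (E i)] {p q : ℝ≥0∞}

section GlidingHump

theorem exists_mem_ne_zero_forall_mem_eq_zero {K : Type*} [DivisionRing K] {F : ι → Type*}
    [∀ i, AddCommGroup (F i)] [∀ i, Module K (F i)] [∀ i, FiniteDimensional K (F i)]
    {Z : Submodule K (∀ i, F i)} (hZ : ¬ FiniteDimensional K Z) {A : Set ι} (hA : A.Finite) :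
    ∃ w ∈ Z, w ≠ 0 ∧ ∀ i ∈ A, w i = 0 := by
  have := hA.to_subtype
  let restrict : Z →ₗ[K] ∀ i : A, F i :=
    LinearMap.pi (fun i : A ↦ LinearMap.proj (i : ι)) ∘ₗ Z.subtype
  have not_injective : ¬ Function.Injective restrict := fun h ↦
    hZ (FiniteDimensional.of_injective restrict h)
  rw [injective_iff_map_eq_zero] at not_injective
  push Not at not_injective
  obtain ⟨w, hw, hw0⟩ := not_injective
  exact ⟨w, w.2, by simpa using hw0, fun i hi ↦ congrFun hw ⟨i, hi⟩⟩

theorem finite_setOf_le_of_tendsto_cofinite_zero {f : ι → ℝ} (hf : Tendsto f cofinite (𝓝 0))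
    {ε : ℝ} (hε : 0 < ε) : {i | ε ≤ f i}.Finite := by
  simpa using eventually_cofinite.1 (hf.eventually (gt_mem_nhds hε))

theorem exists_forall_norm_le_of_tendsto_cofinite_zero {w : ∀ i, E i} (hw0 : w ≠ 0)
    (hw : Tendsto (fun i ↦ ‖w i‖) cofinite (𝓝 0)) : ∃ i, w i ≠ 0 ∧ ∀ j, ‖w j‖ ≤ ‖w i‖ := by
  obtain ⟨i₀, hi₀⟩ := Function.ne_iff.1 hw0
  have hpos : 0 < ‖w i₀‖ := norm_pos_iff.2 hi₀
  obtain ⟨i, hi, hmax⟩ := Set.exists_max_image _ (fun i ↦ ‖w i‖)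
    (finite_setOf_le_of_tendsto_cofinite_zero hw hpos) ⟨i₀, le_refl ‖w i₀‖⟩
  refine ⟨i, norm_pos_iff.1 (hpos.trans_le hi), fun j ↦ ?_⟩
  rcases le_total ‖w i₀‖ ‖w j‖ with hj | hj
  · exact hmax j hj
  · exact hj.trans hi

variable [∀ i, NormedSpace ℝ (E i)] [∀ i, FiniteDimensional ℝ (E i)]

theorem exists_mem_forall_mem_eq_zero_norm_eq {Z : Submodule ℝ (∀ i, E i)}
    (hZ : ¬ FiniteDimensional ℝ Z) (hZ₀ : ∀ z ∈ Z, Tendsto (fun i ↦ ‖z i‖) cofinite (𝓝 0))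
    {A : Set ι} (hA : A.Finite) {r : ℝ} (hr : 0 ≤ r) :
    ∃ w ∈ Z, (∀ i ∈ A, w i = 0) ∧ (∀ i, ‖w i‖ ≤ r) ∧ ∃ i, ‖w i‖ = r := by
  obtain ⟨w, hwZ, hw0, hwA⟩ := exists_mem_ne_zero_forall_mem_eq_zero hZ hA
  obtain ⟨i, hi, hmax⟩ := exists_forall_norm_le_of_tendsto_cofinite_zero hw0 (hZ₀ w hwZ)
  have hpos : 0 < ‖w i‖ := norm_pos_iff.2 hi
  have norm_scaled (j : ι) : ‖((r / ‖w i‖) • w) j‖ = r / ‖w i‖ * ‖w j‖ := by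
    rw [Pi.smul_apply, norm_smul, Real.norm_of_nonneg (by positivity)]
  refine ⟨(r / ‖w i‖) • w, Z.smul_mem _ hwZ, fun j hj ↦ by simp [hwA j hj], fun j ↦ ?_, i, ?_⟩
  · calc ‖((r / ‖w i‖) • w) j‖ = r / ‖w i‖ * ‖w j‖ := norm_scaled j
      _ ≤ r / ‖w i‖ * ‖w i‖ := by gcongr; exact hmax j
      _ = r := div_mul_cancel₀ r hpos.ne'
  · rw [norm_scaled, div_mul_cancel₀ r hpos.ne']

theorem exists_mem_forall_norm_le_three_card_eq {Z : Submodule ℝ (∀ i, E i)}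
    (hZ : ¬ FiniteDimensional ℝ Z) (hZ₀ : ∀ z ∈ Z, Tendsto (fun i ↦ ‖z i‖) cofinite (𝓝 0))
    (n : ℕ) :
    ∃ z ∈ Z, (∀ i, ‖z i‖ ≤ 3) ∧ ∃ s : Finset ι, s.card = n ∧ ∀ i ∈ s, 1 ≤ ‖z i‖ := by
  induction n with
  | zero => exact ⟨0, Z.zero_mem, by simp, ∅, by simp⟩
  | succ n ih =>
    obtain ⟨z, hzZ, hz, s, hs, hzs⟩ := ih
    -- The new hump `w` vanishes wherever `z` is large, so it disturbs none of the earlier humps.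
    obtain ⟨w, hwZ, hwz, hw, i₀, hi₀⟩ := exists_mem_forall_mem_eq_zero_norm_eq hZ hZ₀
      (finite_setOf_le_of_tendsto_cofinite_zero (hZ₀ z hzZ) one_pos) zero_le_two
    have hzi₀ : ‖z i₀‖ < 1 := by
      by_contra! h
      simp [hwz i₀ h] at hi₀
    refine ⟨z + w, Z.add_mem hzZ hwZ, fun i ↦ ?_, s.cons i₀ fun h ↦ hzi₀.not_ge (hzs i₀ h),
      by rw [Finset.card_cons, hs], ?_⟩
    · rcases le_or_gt 1 ‖z i‖ with hi | hi
      · simpa [hwz i hi] using hz i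
      · calc ‖(z + w) i‖ ≤ ‖z i‖ + ‖w i‖ := norm_add_le _ _
          _ ≤ 3 := by linarith [hw i]
    · rw [Finset.forall_mem_cons]
      refine ⟨?_, fun i hi ↦ by simpa [hwz i (hzs i hi)] using hzs i hi⟩
      calc 1 ≤ ‖w i₀‖ - ‖z i₀‖ := by linarith
        _ ≤ ‖(z + w) i₀‖ := by simpa [add_comm] using norm_sub_le_norm_add (w i₀) (z i₀)

end GlidingHump

section Coordinates

theorem lp_tendsto_norm_cofinite_zero (hq : 0 < q.toReal) (x : lp E q) :
    Tendsto (fun i ↦ ‖x i‖) cofinite (𝓝 0) := by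
  have rpow_tendsto : Tendsto (fun i ↦ ‖x i‖ ^ q.toReal) cofinite (𝓝 0) :=
    ((lp.memℓp x).summable hq).tendsto_cofinite_zero
  have := rpow_tendsto.rpow_const (p := q.toReal⁻¹) (Or.inr (by positivity))
  simpa [Real.rpow_rpow_inv, hq.ne', Real.zero_rpow] using this

theorem card_le_lp_norm_rpow (hq : 0 < q.toReal) (x : lp E q) {s : Finset ι}
    (hs : ∀ i ∈ s, 1 ≤ ‖x i‖) : (s.card : ℝ) ≤ ‖x‖ ^ q.toReal :=
  calc (s.card : ℝ) = ∑ _i ∈ s, (1 : ℝ) := by simp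
    _ ≤ ∑ i ∈ s, ‖x i‖ ^ q.toReal :=
      Finset.sum_le_sum fun i hi ↦ Real.one_le_rpow (hs i hi) hq.le
    _ ≤ ‖x‖ ^ q.toReal := lp.sum_rpow_le_norm_rpow hq x s

theorem exists_lp_mem_forall_norm_le_three_card_eq [∀ i, NormedSpace ℝ (E i)]
    [∀ i, FiniteDimensional ℝ (E i)] (hq : 0 < q.toReal) {Z : Submodule ℝ (lp E q)}
    (hZ : ¬ FiniteDimensional ℝ Z) (n : ℕ) :
    ∃ z ∈ Z, (∀ i, ‖z i‖ ≤ 3) ∧ ∃ s : Finset ι, s.card = n ∧ ∀ i ∈ s, 1 ≤ ‖z i‖ := by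
  let coord : lp E q →ₗ[ℝ] ∀ i, E i := LinearMap.pi fun i ↦ lp.evalₗ E q i
  have coord_injective : Function.Injective coord := fun _ _ h ↦ lp.ext h
  have map_infinite : ¬ FiniteDimensional ℝ (Z.map coord) := fun _ ↦
    hZ (Z.equivMapOfInjective coord coord_injective).symm.finiteDimensional
  have map_tendsto : ∀ f ∈ Z.map coord, Tendsto (fun i ↦ ‖f i‖) cofinite (𝓝 0) := by
    rintro _ ⟨z, -, rfl⟩
    exact lp_tendsto_norm_cofinite_zero hq z
  obtain ⟨_, ⟨z, hzZ, rfl⟩, hz⟩ :=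
    exists_mem_forall_norm_le_three_card_eq map_infinite map_tendsto n
  exact ⟨z, hzZ, hz⟩

end Coordinates

section Interpolation

theorem toReal_div_toReal_le_one (hqp : q ≤ p) : q.toReal / p.toReal ≤ 1 := by
  rcases eq_or_ne p ∞ with rfl | hp
  · simp
  · exact div_le_one_of_le₀ (ENNReal.toReal_mono hp hqp) ENNReal.toReal_nonneg

theorem toReal_div_toReal_lt_one (hqp : q < p) : q.toReal / p.toReal < 1 := by
  rcases eq_or_ne p ∞ with rfl | hp
  · simp
  · have hlt := ENNReal.toReal_strict_mono hp hqp
    exact (div_lt_one (ENNReal.toReal_nonneg.trans_lt hlt)).2 hlt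

variable {𝕜 : Type*} [NormedRing 𝕜] [∀ i, Module 𝕜 (E i)] [∀ i, IsBoundedSMul 𝕜 (E i)]

theorem norm_lp_linearMapOfLE_le_rpow_mul_rpow (hq : 0 < q) (hqp : q ≤ p) (x : lp E q) {M : ℝ}
    (hM₀ : 0 ≤ M) (hM : ∀ i, ‖x i‖ ≤ M) :
    ‖lp.linearMapOfLE 𝕜 E hqp x‖ ≤
      M ^ (1 - q.toReal / p.toReal) * ‖x‖ ^ (q.toReal / p.toReal) := by
  -- At `p = ∞` the exponent `q.toReal / p.toReal` is `q.toReal / 0 = 0`, as it should be.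
  rcases eq_or_ne p ∞ with rfl | hp
  · simpa using lp.norm_le_of_forall_le hM₀ hM
  have hqp' : q.toReal ≤ p.toReal := ENNReal.toReal_mono hp hqp
  have hq' : 0 < q.toReal := ENNReal.toReal_pos hq.ne' (ne_top_of_le_ne_top hp hqp)
  have hp' : 0 < p.toReal := hq'.trans_le hqp'
  have hx : 0 ≤ ‖x‖ := lp.norm_nonneg' x
  refine lp.norm_le_of_forall_sum_le hp' (by positivity) fun s ↦ ?_
  calc ∑ i ∈ s, ‖x i‖ ^ p.toReal
      = ∑ i ∈ s, ‖x i‖ ^ (p.toReal - q.toReal) * ‖x i‖ ^ q.toReal :=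
        Finset.sum_congr rfl fun i _ ↦ by
          rw [← Real.rpow_add_of_nonneg (norm_nonneg _) (sub_nonneg.2 hqp') hq'.le,
            sub_add_cancel]
    _ ≤ ∑ i ∈ s, M ^ (p.toReal - q.toReal) * ‖x i‖ ^ q.toReal := by
        gcongr with i
        exact hM i
    _ = M ^ (p.toReal - q.toReal) * ∑ i ∈ s, ‖x i‖ ^ q.toReal := (Finset.mul_sum ..).symm
    _ ≤ M ^ (p.toReal - q.toReal) * ‖x‖ ^ q.toReal := by
        gcongr
        exact lp.sum_rpow_le_norm_rpow hq' x s
    _ = (M ^ (1 - q.toReal / p.toReal) * ‖x‖ ^ (q.toReal / p.toReal)) ^ p.toReal := by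
        rw [Real.mul_rpow (by positivity) (by positivity), ← Real.rpow_mul hM₀,
          ← Real.rpow_mul hx, sub_mul, one_mul, div_mul_cancel₀ _ hp'.ne']

theorem norm_lp_linearMapOfLE_le (hq : 0 < q) (hqp : q ≤ p) (x : lp E q) :
    ‖lp.linearMapOfLE 𝕜 E hqp x‖ ≤ ‖x‖ :=
  calc ‖lp.linearMapOfLE 𝕜 E hqp x‖
      ≤ ‖x‖ ^ (1 - q.toReal / p.toReal) * ‖x‖ ^ (q.toReal / p.toReal) :=
        norm_lp_linearMapOfLE_le_rpow_mul_rpow hq hqp x (lp.norm_nonneg' x)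
          (lp.norm_apply_le_norm hq.ne' x)
    _ = ‖x‖ := by
        rw [← Real.rpow_add_of_nonneg (lp.norm_nonneg' x)
          (sub_nonneg.2 (toReal_div_toReal_le_one hqp)) (by positivity), sub_add_cancel,
          Real.rpow_one]

theorem le_mul_of_mul_le_rpow_mul_rpow {c t M θ : ℝ} (hc : 0 < c) (ht : 0 ≤ t) (hM : 0 ≤ M)
    (hθ : θ < 1) (h : c * t ≤ M ^ (1 - θ) * t ^ θ) : t ≤ c⁻¹ ^ (1 - θ)⁻¹ * M := by
  rcases ht.eq_or_lt with rfl | ht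
  · positivity
  have hθ' : 0 < 1 - θ := sub_pos.2 hθ
  have mul_rpow_le : c * t ^ (1 - θ) ≤ M ^ (1 - θ) := by
    refine le_of_mul_le_mul_right ?_ (Real.rpow_pos_of_pos ht θ)
    rwa [mul_assoc, ← Real.rpow_add ht, sub_add_cancel, Real.rpow_one]
  rw [← Real.rpow_le_rpow_iff ht.le (by positivity) hθ', Real.mul_rpow (by positivity) hM,
    Real.rpow_inv_rpow (by positivity) hθ'.ne']
  exact (le_inv_mul_iff₀ hc).2 mul_rpow_le

end Interpolation

theorem not_isCompact_of_pairwise_le_dist {X : Type*} [MetricSpace X] [Infinite ι] {f : ι → X}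
    {ε : ℝ} (hε : 0 < ε) (hf : Pairwise fun i j ↦ ε ≤ dist (f i) (f j)) {K : Set X}
    (hfK : ∀ i, f i ∈ K) : ¬ IsCompact K := by
  intro hK
  let _ : TopologicalSpace ι := ⊥
  have : DiscreteTopology ι := ⟨rfl⟩
  have preimage_compact : IsCompact (f ⁻¹' K) :=
    (Metric.isClosedEmbedding_of_pairwise_le_dist hε hf).isCompact_preimage hK
  rw [Set.eq_univ_of_forall (s := f ⁻¹' K) hfK] at preimage_compact
  exact Set.infinite_univ preimage_compact.finite_of_discrete

theorem norm_le_dist_lp_single [DecidableEq ι] [Fact (1 ≤ p)] {i j : ι} (hij : i ≠ j) (a : E i)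
    (b : E j) : ‖a‖ ≤ dist (lp.single p i a) (lp.single p j b) := by
  have coord_eq : (lp.single p i a - lp.single p j b) i = a := by
    rw [lp.coeFn_sub, Pi.sub_apply, lp.single_apply_self, lp.single_apply_ne p j b hij, sub_zero]
  have hp : p ≠ 0 := (one_pos.trans_le Fact.out).ne'
  simpa only [dist_eq_norm, coord_eq] using
    lp.norm_apply_le_norm hp (lp.single p i a - lp.single p j b) i

section Inclusion

variable {𝕜 : Type*} [NormedRing 𝕜] [∀ i, Module 𝕜 (E i)] [∀ i, IsBoundedSMul 𝕜 (E i)]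
  [Fact (1 ≤ q)] [Fact (1 ≤ p)]

variable (E 𝕜) in
/-- The inclusion `ℓ^q ⊆ ℓ^p` for `q ≤ p` as a bounded operator: the continuous version of
`lp.linearMapOfLE`. -/
noncomputable def lpInclusion (hqp : q ≤ p) : lp E q →L[𝕜] lp E p :=
  (lp.linearMapOfLE 𝕜 E hqp).mkContinuous 1 fun x ↦ by
    simpa using norm_lp_linearMapOfLE_le (one_pos.trans_le Fact.out) hqp x

theorem coe_lpInclusion_apply (hqp : q ≤ p) (x : lp E q) : ⇑(lpInclusion E 𝕜 hqp x) = x := rfl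

theorem lpInclusion_injective (hqp : q ≤ p) : Function.Injective (lpInclusion E 𝕜 hqp) := by
  intro x y h
  refine lp.ext ?_
  rw [← coe_lpInclusion_apply (𝕜 := 𝕜) hqp x, h, coe_lpInclusion_apply]

theorem lpInclusion_single [DecidableEq ι] (hqp : q ≤ p) (i : ι) (a : E i) :
    lpInclusion E 𝕜 hqp (lp.single q i a) = lp.single p i a :=
  lp.ext (by rw [coe_lpInclusion_apply, lp.coeFn_single, lp.coeFn_single])

end Inclusion

section Real

variable [∀ i, NormedSpace ℝ (E i)] [Fact (1 ≤ q)] [Fact (1 ≤ p)]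

theorem lpInclusion_strictlySingular [∀ i, FiniteDimensional ℝ (E i)] (hqp : q < p) :
    StrictlySingular (lpInclusion E ℝ hqp.le) := by
  rintro Z - hZ ⟨c, hc, bounded_below⟩
  have hq : 0 < q := one_pos.trans_le Fact.out
  have hq' : 0 < q.toReal := ENNReal.toReal_pos hq.ne' hqp.ne_top
  set C : ℝ := c⁻¹ ^ (1 - q.toReal / p.toReal)⁻¹
  have norm_le_mul_three {z : lp E q} (hzZ : z ∈ Z) (hz : ∀ i, ‖z i‖ ≤ 3) : ‖z‖ ≤ C * 3 :=
    le_mul_of_mul_le_rpow_mul_rpow hc (norm_nonneg z) zero_le_three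
      (toReal_div_toReal_lt_one hqp) <| (bounded_below z hzZ).trans <|
      norm_lp_linearMapOfLE_le_rpow_mul_rpow hq hqp.le z zero_le_three hz
  obtain ⟨n, hn⟩ := exists_nat_gt ((C * 3) ^ q.toReal)
  obtain ⟨z, hzZ, hz, s, rfl, hs⟩ := exists_lp_mem_forall_norm_le_three_card_eq hq' hZ n
  refine hn.not_ge ?_
  calc (s.card : ℝ) ≤ ‖z‖ ^ q.toReal := card_le_lp_norm_rpow hq' z hs
    _ ≤ (C * 3) ^ q.toReal := by gcongr; exact norm_le_mul_three hzZ hz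

theorem not_isCompact_closure_lpInclusion_image_closedBall [Infinite ι] [∀ i, Nontrivial (E i)]
    (hqp : q ≤ p) : ¬ IsCompact (closure (lpInclusion E ℝ hqp '' Metric.closedBall 0 1)) := by
  classical
  choose u hu using fun i ↦ exists_norm_eq (E i) zero_le_one
  refine not_isCompact_of_pairwise_le_dist (f := fun i ↦ lp.single p i (u i)) one_pos
    (fun i j hij ↦ (hu i).ge.trans (norm_le_dist_lp_single hij _ _)) fun i ↦ ?_
  refine subset_closure ⟨lp.single q i (u i), ?_, lpInclusion_single hqp i (u i)⟩
  rw [mem_closedBall_zero_iff, lp.norm_single (one_pos.trans_le Fact.out), hu]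

end Real

end LpSpaces

theorem embedding_l2_lp_strictlySingular_not_compact_general {ι : Type*} [Infinite ι]
    {E : ι → Type*} [∀ i, NormedAddCommGroup (E i)] [∀ i, NormedSpace ℝ (E i)]
    [∀ i, FiniteDimensional ℝ (E i)] [∀ i, Nontrivial (E i)]
    {q p : ℝ≥0∞} [Fact (1 ≤ q)] [Fact (1 ≤ p)] (hqp : q < p) :
    ∃ T : lp E q →L[ℝ] lp E p,
      (∀ (x : lp E q) (i : ι), T x i = x i) ∧
      Function.Injective T ∧
      StrictlySingular T ∧
      ¬ IsCompact (closure (T '' Metric.closedBall 0 1)) :=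
  ⟨lpInclusion E ℝ hqp.le, fun x i ↦ congrFun (coe_lpInclusion_apply hqp.le x) i,
    lpInclusion_injective hqp.le, lpInclusion_strictlySingular hqp,
    not_isCompact_closure_lpInclusion_image_closedBall hqp.le⟩

/-- For `2 < p < ∞`, the natural embedding `E : ℓ² → ℓ^p` (identity on sequences)
is a well-defined injective bounded linear operator which is strictly singular and not compact. -/
theorem embedding_l2_lp_strictlySingular_not_compact
    (p : ℝ≥0∞) [Fact (1 ≤ p)] (hp1 : 2 < p) (hp2 : p < ∞) :
    ∃ E : lp (fun _ : ℕ => ℝ) 2 →L[ℝ] lp (fun _ : ℕ => ℝ) p,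
      (∀ (x : lp (fun _ : ℕ => ℝ) 2) (k : ℕ), E x k = x k) ∧
      Function.Injective E ∧
      StrictlySingular E ∧
      ¬ IsCompact (closure (E '' Metric.closedBall 0 1)) :=
  embedding_l2_lp_strictlySingular_not_compact_general hp1
end

section
/- Let X be an infinite-dimensional real Banach space and let C : X → X be a bounded linear operator that is strictly singular and whose range R(C) is not closed. On the product Banach space X × X define D₁(u, v) = (C u, v) and D₂(u, v) = (u, C v). Then: (i) D₁ and D₂ are not strictly singular, their ranges R(D₁) = R(C) × X and R(D₂) = X × R(C) are not closed, and these ranges contain the infinite-dimensional closed subspaces {0} × X and X × {0} respectively; (ii) the composition D₂ ∘ D₁, given by (u, v) ↦ (C u, C v), is strictly singular and has non-closed range R(C) × R(C). -/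
/-!
The operators `D₁`, `D₂` and `D₂ ∘ D₁` are all of the form `S × T`. The range of `S × T` is closed
exactly when both factors have closed range, and `S × T` is strictly singular exactly when both
factors are; an identity factor on an infinite-dimensional space destroys the latter.

The substantial point is that `z ↦ (A z, B z)` is strictly singular when `A` and `B` are. Kato's
lemma provides it: inside every infinite-dimensional subspace there is an infinite-dimensional
subspace on which `A` has arbitrarily small norm. It is spanned by unit vectors `z₀, z₁, …` with
`‖A zₖ‖` decaying like `4⁻ᵏ`, each chosen in the kernel of norming functionals of its predecessors,
which bounds the `k`-th coefficient of a combination `w` by `2ᵏ ‖w‖`. On that subspace `B` cannot be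
bounded below, so neither can `(A, B)`.
-/

theorem moduleFinite_of_map_of_inf_ker {R M N : Type*} [Ring R] [AddCommGroup M] [Module R M]
    [AddCommGroup N] [Module R N] {p : Submodule R M} {f : M →ₗ[R] N}
    (hmap : Module.Finite R (p.map f)) (hker : Module.Finite R ↥(p ⊓ LinearMap.ker f)) :
    Module.Finite R p := by
  rw [Module.Finite.iff_fg] at *
  exact Submodule.fg_of_fg_map_of_fg_inf_ker f hmap hker

theorem not_finiteDimensional_top {K V : Type*} [DivisionRing K] [AddCommGroup V] [Module K V]
    (hV : ¬ FiniteDimensional K V) : ¬ FiniteDimensional K (⊤ : Submodule K V) := fun _ =>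
  hV (Module.Finite.equiv Submodule.topEquiv)

section ProdSubmodule

variable {R M N : Type*} [Semiring R] [AddCommMonoid M] [Module R M] [AddCommMonoid N] [Module R N]
  {p : Submodule R M} {q : Submodule R N}

theorem moduleFinite_left_of_prod (h : Module.Finite R (p.prod q)) : Module.Finite R p := by
  rw [← Submodule.prod_map_fst p q]
  exact h.map _ _

theorem moduleFinite_right_of_prod (h : Module.Finite R (p.prod q)) : Module.Finite R q := by
  rw [← Submodule.prod_map_snd p q]
  exact h.map _ _

end ProdSubmodule

theorem isClosed_prod_iff_of_nonempty {α β : Type*} [TopologicalSpace α] [TopologicalSpace β]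
    {s : Set α} {t : Set β} (hs : s.Nonempty) (ht : t.Nonempty) :
    IsClosed (s ×ˢ t) ↔ IsClosed s ∧ IsClosed t := by
  simp only [← closure_eq_iff_isClosed, closure_prod_eq,
    Set.prod_eq_prod_iff_of_nonempty (hs.closure.prod ht.closure)]

section TriangularSystem

open Finset

variable {𝕜 E : Type*} [NontriviallyNormedField 𝕜] [NormedAddCommGroup E] [NormedSpace 𝕜 E]

/-- Vectors `z k` and functionals `f k` in the closed unit balls whose matrix `f i (z j)` is lower
triangular with unit diagonal. This one-sided form of biorthogonality is enough to control the
coefficients of linear combinations of the `z k`. -/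
structure IsTriangularSystem (z : ℕ → E) (f : ℕ → StrongDual 𝕜 E) : Prop where
  norm_vector_le_one : ∀ k, ‖z k‖ ≤ 1
  norm_functional_le_one : ∀ k, ‖f k‖ ≤ 1
  apply_self : ∀ k, f k (z k) = 1
  apply_eq_zero_of_lt : ∀ i j, i < j → f i (z j) = 0

namespace IsTriangularSystem

variable {z : ℕ → E} {f : ℕ → StrongDual 𝕜 E}

theorem apply_linearCombination (h : IsTriangularSystem z f) (a : ℕ →₀ 𝕜) (k : ℕ) :
    f k (Finsupp.linearCombination 𝕜 z a) = ∑ j ∈ range k, a j * f k (z j) + a k := by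
  have hlast : ∑ j ∈ range (k + 1), a j * f k (z j) = ∑ j ∈ range k, a j * f k (z j) + a k := by
    rw [sum_range_succ, h.apply_self, mul_one]
  rw [← hlast, Finsupp.linearCombination_apply, Finsupp.sum, map_sum]
  refine sum_congr_of_eq_on_inter (fun j _ hj => ?_) (fun j _ hj => ?_) (fun j _ _ => by simp)
  · have hkj : k < j := by simpa [Nat.lt_succ_iff] using hj
    simp [h.apply_eq_zero_of_lt k j hkj]
  · simp [Finsupp.notMem_support_iff.mp hj]

theorem norm_coeff_le (h : IsTriangularSystem z f) (a : ℕ →₀ 𝕜) (k : ℕ) :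
    ‖a k‖ ≤ 2 ^ k * ‖Finsupp.linearCombination 𝕜 z a‖ := by
  induction k using Nat.strong_induction_on with
  | _ k ih =>
    set w := Finsupp.linearCombination 𝕜 z a
    have hterm : ∀ j ∈ range k, ‖a j * f k (z j)‖ ≤ 2 ^ j * ‖w‖ := fun j hj => by
      have hfz : ‖f k (z j)‖ ≤ 1 := by
        simpa using (f k).le_of_opNorm_le_of_le (h.norm_functional_le_one k)
          (h.norm_vector_le_one j)
      calc ‖a j * f k (z j)‖ = ‖a j‖ * ‖f k (z j)‖ := norm_mul _ _
        _ ≤ ‖a j‖ := mul_le_of_le_one_right (norm_nonneg _) hfz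
        _ ≤ 2 ^ j * ‖w‖ := ih j (mem_range.mp hj)
    have hfw : ‖f k w‖ ≤ ‖w‖ := by
      simpa using (f k).le_of_opNorm_le (h.norm_functional_le_one k) w
    calc ‖a k‖ = ‖f k w - ∑ j ∈ range k, a j * f k (z j)‖ := by
          rw [h.apply_linearCombination, add_sub_cancel_left]
      _ ≤ ‖f k w‖ + ‖∑ j ∈ range k, a j * f k (z j)‖ := norm_sub_le _ _
      _ ≤ ‖w‖ + ∑ j ∈ range k, 2 ^ j * ‖w‖ := add_le_add hfw (norm_sum_le_of_le _ hterm)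
      _ = 2 ^ k * ‖w‖ := by
          rw [← sum_mul, geom_sum_eq (by norm_num)]
          ring

theorem linearIndependent (h : IsTriangularSystem z f) : LinearIndependent 𝕜 z := by
  refine linearIndependent_iff.mpr fun a ha => Finsupp.ext fun k => norm_le_zero_iff.mp ?_
  simpa [ha] using h.norm_coeff_le a k

theorem not_finiteDimensional_span (h : IsTriangularSystem z f) :
    ¬ FiniteDimensional 𝕜 (Submodule.span 𝕜 (Set.range z)) := fun _ =>
  have := (linearIndependent_span h.linearIndependent).finite_of_isNoetherian
  not_finite ℕ

theorem norm_apply_le_of_mem_span {F : Type*} [NormedAddCommGroup F] [NormedSpace 𝕜 F]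
    (h : IsTriangularSystem z f) {A : E →L[𝕜] F} {ε : ℝ}
    (hA : ∀ k, ‖A (z k)‖ ≤ ε / 2 * (1 / 4) ^ k) {w : E}
    (hw : w ∈ Submodule.span 𝕜 (Set.range z)) : ‖A w‖ ≤ ε * ‖w‖ := by
  have hε : 0 ≤ ε := by linarith [(norm_nonneg (A (z 0))).trans (hA 0)]
  obtain ⟨a, rfl⟩ := Finsupp.mem_span_range_iff_exists_finsupp.mp hw
  set w := a.sum fun j c => c • z j with hw_def
  have hterm : ∀ j ∈ a.support, ‖a j • A (z j)‖ ≤ ε / 2 * ‖w‖ * (1 / 2) ^ j := fun j _ =>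
    calc ‖a j • A (z j)‖ = ‖a j‖ * ‖A (z j)‖ := norm_smul _ _
      _ ≤ (2 ^ j * ‖w‖) * (ε / 2 * (1 / 4) ^ j) := by
          gcongr
          · exact h.norm_coeff_le a j
          · exact hA j
      _ = ε / 2 * ‖w‖ * (2 * (1 / 4)) ^ j := by rw [mul_pow]; ring
      _ = ε / 2 * ‖w‖ * (1 / 2) ^ j := by norm_num
  calc ‖A w‖ = ‖∑ j ∈ a.support, a j • A (z j)‖ := by
        simp only [hw_def, Finsupp.sum, map_sum, map_smul]
    _ ≤ ∑ j ∈ a.support, ε / 2 * ‖w‖ * (1 / 2) ^ j := norm_sum_le_of_le _ hterm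
    _ = ε / 2 * ‖w‖ * ∑ j ∈ a.support, (1 / 2 : ℝ) ^ j := (mul_sum _ _ _).symm
    _ ≤ ε / 2 * ‖w‖ * 2 := by
        gcongr
        exact (summable_geometric_two.sum_le_tsum _ fun _ _ => by positivity).trans_eq
          tsum_geometric_two
    _ = ε * ‖w‖ := by ring

end IsTriangularSystem

end TriangularSystem

section NormedSpace

variable {E F G H : Type*} [NormedAddCommGroup E] [NormedSpace ℝ E]
  [NormedAddCommGroup F] [NormedSpace ℝ F] [NormedAddCommGroup G] [NormedSpace ℝ G]
  [NormedAddCommGroup H] [NormedSpace ℝ H]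

namespace StrictlySingular

theorem exists_norm_lt {A : E →L[ℝ] F} (hA : StrictlySingular A) {Z : Submodule ℝ E}
    (hZ : ¬ FiniteDimensional ℝ Z) {ε : ℝ} (hε : 0 < ε) : ∃ z ∈ Z, ‖A z‖ < ε * ‖z‖ := by
  by_contra! hbelow
  -- The lower bound passes to the closure of `Z`.
  have hclosed : IsClosed {z : E | ε * ‖z‖ ≤ ‖A z‖} := isClosed_le (by fun_prop) (by fun_prop)
  exact hA Z.topologicalClosure Z.isClosed_topologicalClosure
    (fun _ => hZ (Submodule.finiteDimensional_of_le Z.le_topologicalClosure))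
    ⟨ε, hε, fun z hz => closure_minimal hbelow hclosed hz⟩

theorem exists_norm_eq_one_norm_lt {A : E →L[ℝ] F} (hA : StrictlySingular A) {Z : Submodule ℝ E}
    (hZ : ¬ FiniteDimensional ℝ Z) {ε : ℝ} (hε : 0 < ε) :
    ∃ z ∈ Z, ‖z‖ = 1 ∧ ‖A z‖ < ε := by
  obtain ⟨z, hzZ, hz⟩ := hA.exists_norm_lt hZ hε
  have hz_pos : 0 < ‖z‖ := pos_of_mul_pos_right ((norm_nonneg _).trans_lt hz) hε.le
  refine ⟨‖z‖⁻¹ • z, Z.smul_mem _ hzZ, by simp [norm_smul, hz_pos.ne'], ?_⟩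
  rwa [map_smul, norm_smul, norm_inv, norm_norm, inv_mul_lt_iff₀ hz_pos, mul_comm]

theorem exists_norm_eq_one_norm_lt_of_finset {A : E →L[ℝ] F} (hA : StrictlySingular A)
    {Z : Submodule ℝ E} (hZ : ¬ FiniteDimensional ℝ Z) {ε : ℝ} (hε : 0 < ε)
    (s : Finset (StrongDual ℝ E)) :
    ∃ z ∈ Z, ‖z‖ = 1 ∧ ‖A z‖ < ε ∧ ∀ f ∈ s, f z = 0 := by
  let evalAll : E →ₗ[ℝ] (s → ℝ) := LinearMap.pi fun f => (f : StrongDual ℝ E).toLinearMap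
  obtain ⟨z, ⟨hzZ, hz_ker⟩, hz, hAz⟩ := hA.exists_norm_eq_one_norm_lt
    (Z := Z ⊓ LinearMap.ker evalAll)
    (fun h => hZ (moduleFinite_of_map_of_inf_ker inferInstance h)) hε
  exact ⟨z, hzZ, hz, hAz, fun f hf => congrFun hz_ker ⟨f, hf⟩⟩

theorem exists_isTriangularSystem {A : E →L[ℝ] F} (hA : StrictlySingular A) {Z : Submodule ℝ E}
    (hZ : ¬ FiniteDimensional ℝ Z) {δ : ℕ → ℝ} (hδ : Antitone δ) (hδ_pos : ∀ n, 0 < δ n) :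
    ∃ (z : ℕ → E) (f : ℕ → StrongDual ℝ E),
      IsTriangularSystem z f ∧ (∀ k, z k ∈ Z) ∧ ∀ k, ‖A (z k)‖ ≤ δ k := by
  classical
  -- Each triple carries, besides a vector and a functional, an index into `δ` that must increase.
  obtain ⟨g, hg, hg_lt⟩ := exists_seq_of_forall_finset_exists
    (fun x : ℕ × E × StrongDual ℝ E =>
      x.2.1 ∈ Z ∧ ‖x.2.1‖ = 1 ∧ ‖x.2.2‖ ≤ 1 ∧ x.2.2 x.2.1 = 1 ∧ ‖A x.2.1‖ < δ x.1)
    (fun x y => x.1 < y.1 ∧ x.2.2 y.2.1 = 0) fun s _ => by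
      let n := s.sup Prod.fst + 1
      obtain ⟨z, hzZ, hz, hAz, hsz⟩ := hA.exists_norm_eq_one_norm_lt_of_finset hZ (hδ_pos n)
        (s.image fun x => x.2.2)
      obtain ⟨f, hf, hfz⟩ := exists_dual_vector'' ℝ z
      exact ⟨(n, z, f), ⟨hzZ, hz, hf, by simp [hfz, hz], hAz⟩, fun x hx =>
        ⟨Nat.lt_succ_of_le (Finset.le_sup (f := Prod.fst) hx),
          hsz _ (Finset.mem_image_of_mem _ hx)⟩⟩
  choose hmem hnorm_vec hnorm_fun hself hsmall using hg
  have hindex : StrictMono fun k => (g k).1 := fun i j hij => (hg_lt i j hij).1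
  exact ⟨fun k => (g k).2.1, fun k => (g k).2.2,
    ⟨fun k => (hnorm_vec k).le, hnorm_fun, hself, fun i j hij => (hg_lt i j hij).2⟩, hmem,
    fun k => (hsmall k).le.trans (hδ hindex.le_apply)⟩

theorem exists_submodule_norm_le {A : E →L[ℝ] F} (hA : StrictlySingular A) {Z : Submodule ℝ E}
    (hZ : ¬ FiniteDimensional ℝ Z) {ε : ℝ} (hε : 0 < ε) :
    ∃ W ≤ Z, ¬ FiniteDimensional ℝ W ∧ ∀ w ∈ W, ‖A w‖ ≤ ε * ‖w‖ := by
  have hδ : Antitone fun k : ℕ => ε / 2 * (1 / 4) ^ k :=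
    (pow_right_anti₀ (by norm_num) (by norm_num)).const_mul (by positivity)
  obtain ⟨z, f, hzf, hzZ, hAz⟩ := hA.exists_isTriangularSystem hZ hδ fun _ => by positivity
  exact ⟨Submodule.span ℝ (Set.range z), Submodule.span_le.mpr (Set.range_subset_iff.mpr hzZ),
    hzf.not_finiteDimensional_span, fun _ => hzf.norm_apply_le_of_mem_span hAz⟩

theorem prod {A : E →L[ℝ] F} {B : E →L[ℝ] G} (hA : StrictlySingular A) (hB : StrictlySingular B) :
    StrictlySingular (A.prod B) := by
  rintro Z - hZ ⟨c, hc, hbelow⟩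
  obtain ⟨W, hWZ, hW, hAW⟩ := hA.exists_submodule_norm_le hZ (half_pos hc)
  obtain ⟨w, hwW, hw, hBw⟩ := hB.exists_norm_eq_one_norm_lt hW hc
  have hAw : ‖A w‖ < c := calc
    ‖A w‖ ≤ c / 2 := by simpa [hw] using hAW w hwW
    _ < c := half_lt_self hc
  have hABw : c ≤ max ‖A w‖ ‖B w‖ := by simpa [hw] using hbelow w (hWZ hwW)
  exact hABw.not_gt (max_lt hAw hBw)

theorem clm_comp {A : E →L[ℝ] F} (hA : StrictlySingular A) (B : F →L[ℝ] G) :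
    StrictlySingular (B.comp A) := by
  rintro Z - hZ ⟨c, hc, hbelow⟩
  obtain ⟨z, hzZ, hz, hAz⟩ := hA.exists_norm_eq_one_norm_lt hZ
    (show 0 < c / (‖B‖ + 1) by positivity)
  have hlt : (‖B‖ + 1) * ‖A z‖ < c := (lt_div_iff₀' (by positivity)).mp hAz
  have hle : c ≤ ‖B (A z)‖ := by simpa [hz] using hbelow z hzZ
  linarith [B.le_opNorm (A z), norm_nonneg (A z)]

theorem comp_clm {A : F →L[ℝ] G} (hA : StrictlySingular A) (T : E →L[ℝ] F) :
    StrictlySingular (A.comp T) := by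
  rintro Z - hZ ⟨c, hc, hbelow⟩
  have hker : Z ⊓ LinearMap.ker T.toLinearMap = ⊥ := by
    refine (Submodule.eq_bot_iff _).mpr fun z ⟨hzZ, hTz⟩ => norm_le_zero_iff.mp ?_
    have hTz' : T z = 0 := hTz
    have hcz : c * ‖z‖ ≤ 0 := by simpa [hTz'] using hbelow z hzZ
    exact nonpos_of_mul_nonpos_right hcz hc
  have hmap : ¬ FiniteDimensional ℝ (Z.map T.toLinearMap) := fun h =>
    hZ (moduleFinite_of_map_of_inf_ker h (hker ▸ inferInstance))
  obtain ⟨_, ⟨z, hzZ, rfl⟩, hz⟩ := hA.exists_norm_lt hmap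
    (show 0 < c / (‖T‖ + 1) by positivity)
  refine (hbelow z hzZ).not_gt ?_
  calc ‖A (T z)‖ < c / (‖T‖ + 1) * ‖T z‖ := hz
    _ ≤ c / (‖T‖ + 1) * ((‖T‖ + 1) * ‖z‖) := by
        gcongr
        exact T.le_of_opNorm_le (by linarith) z
    _ = c * ‖z‖ := by field_simp

end StrictlySingular

theorem strictlySingular_prodMap_iff {S : E →L[ℝ] G} {T : F →L[ℝ] H} :
    StrictlySingular (S.prodMap T) ↔ StrictlySingular S ∧ StrictlySingular T where
  mp h := by
    have hS := (h.comp_clm (.inl ℝ E F)).clm_comp (.fst ℝ G H)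
    have hT := (h.comp_clm (.inr ℝ E F)).clm_comp (.snd ℝ G H)
    exact ⟨hS, hT⟩
  mpr h := (h.1.comp_clm (.fst ℝ E F)).prod (h.2.comp_clm (.snd ℝ E F))

theorem not_strictlySingular_id (hE : ¬ FiniteDimensional ℝ E) :
    ¬ StrictlySingular (ContinuousLinearMap.id ℝ E) := fun h => by
  obtain ⟨z, -, hz⟩ := h.exists_norm_lt (not_finiteDimensional_top hE) one_pos
  simp at hz

theorem isClosed_range_prodMap_iff {S : E →L[ℝ] G} {T : F →L[ℝ] H} :
    IsClosed (Set.range (S.prodMap T)) ↔ IsClosed (Set.range S) ∧ IsClosed (Set.range T) := by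
  rw [ContinuousLinearMap.coe_prodMap', Set.range_prodMap,
    isClosed_prod_iff_of_nonempty (Set.range_nonempty S) (Set.range_nonempty T)]

theorem bot_prod_top_subset_range_prodMap (S : E →L[ℝ] G) {T : F →L[ℝ] H}
    (hT : Function.Surjective T) :
    ((⊥ : Submodule ℝ G).prod (⊤ : Submodule ℝ H) : Set (G × H)) ⊆ Set.range (S.prodMap T) := by
  rintro ⟨_, y⟩ ⟨rfl, -⟩
  obtain ⟨v, rfl⟩ := hT y
  exact ⟨(0, v), by simp⟩

theorem top_prod_bot_subset_range_prodMap {S : E →L[ℝ] G} (hS : Function.Surjective S)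
    (T : F →L[ℝ] H) :
    ((⊤ : Submodule ℝ G).prod (⊥ : Submodule ℝ H) : Set (G × H)) ⊆ Set.range (S.prodMap T) := by
  rintro ⟨x, _⟩ ⟨-, rfl⟩
  obtain ⟨u, rfl⟩ := hS x
  exact ⟨(u, 0), by simp⟩

theorem composition_crosses_type_divide_general
    (hF : ¬ FiniteDimensional ℝ F) (hG : ¬ FiniteDimensional ℝ G)
    {S : E →L[ℝ] G} {T : F →L[ℝ] H} (hS : StrictlySingular S) (hT : StrictlySingular T)
    (hS_range : ¬ IsClosed (Set.range S)) (hT_range : ¬ IsClosed (Set.range T))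
    {D₁ : E × F →L[ℝ] G × F} {D₂ : G × F →L[ℝ] G × H}
    (hD₁ : ∀ u v, D₁ (u, v) = (S u, v)) (hD₂ : ∀ u v, D₂ (u, v) = (u, T v)) :
    (¬ StrictlySingular D₁ ∧ ¬ StrictlySingular D₂) ∧
    (Set.range D₁ = Set.range S ×ˢ Set.univ ∧ Set.range D₂ = Set.univ ×ˢ Set.range T ∧
      ¬ IsClosed (Set.range D₁) ∧ ¬ IsClosed (Set.range D₂)) ∧
    (let M₁ : Submodule ℝ (G × F) := (⊥ : Submodule ℝ G).prod (⊤ : Submodule ℝ F)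
     let M₂ : Submodule ℝ (G × H) := (⊤ : Submodule ℝ G).prod (⊥ : Submodule ℝ H)
     (IsClosed (M₁ : Set (G × F)) ∧ ¬ FiniteDimensional ℝ M₁ ∧
        (M₁ : Set (G × F)) ⊆ Set.range D₁) ∧
     (IsClosed (M₂ : Set (G × H)) ∧ ¬ FiniteDimensional ℝ M₂ ∧
        (M₂ : Set (G × H)) ⊆ Set.range D₂)) ∧
    (StrictlySingular (D₂.comp D₁) ∧
      Set.range (D₂.comp D₁) = Set.range S ×ˢ Set.range T ∧
      ¬ IsClosed (Set.range (D₂.comp D₁))) := by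
  obtain rfl : D₁ = S.prodMap (.id ℝ F) := ContinuousLinearMap.ext fun x => hD₁ x.1 x.2
  obtain rfl : D₂ = (ContinuousLinearMap.id ℝ G).prodMap T :=
    ContinuousLinearMap.ext fun x => hD₂ x.1 x.2
  have hcomp : ((ContinuousLinearMap.id ℝ G).prodMap T).comp (S.prodMap (.id ℝ F)) =
      S.prodMap T := rfl
  have hD₁_not_singular : ¬ StrictlySingular (S.prodMap (.id ℝ F)) := fun h =>
    not_strictlySingular_id hF (strictlySingular_prodMap_iff.mp h).2
  have hD₂_not_singular : ¬ StrictlySingular ((ContinuousLinearMap.id ℝ G).prodMap T) := fun h =>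
    not_strictlySingular_id hG (strictlySingular_prodMap_iff.mp h).1
  exact ⟨⟨hD₁_not_singular, hD₂_not_singular⟩,
    ⟨by simp, by simp, fun h => hS_range (isClosed_range_prodMap_iff.mp h).1,
      fun h => hT_range (isClosed_range_prodMap_iff.mp h).2⟩,
    ⟨⟨isClosed_singleton.prod isClosed_univ,
        fun h => not_finiteDimensional_top hF (moduleFinite_right_of_prod h),
        bot_prod_top_subset_range_prodMap S Function.surjective_id⟩,
      isClosed_univ.prod isClosed_singleton,
      fun h => not_finiteDimensional_top hG (moduleFinite_left_of_prod h),
      top_prod_bot_subset_range_prodMap Function.surjective_id T⟩,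
    hcomp ▸ strictlySingular_prodMap_iff.mpr ⟨hS, hT⟩, by simp [hcomp],
    fun h => hS_range (isClosed_range_prodMap_iff.mp (hcomp ▸ h)).1⟩

end NormedSpace

/-- For a strictly singular operator `C : X → X` with non-closed range on an
infinite-dimensional real Banach space `X`, the operators `D₁(u,v) = (Cu, v)` and
`D₂(u,v) = (u, Cv)` on `X × X` are not strictly singular, have non-closed ranges
`R(C) × X` resp. `X × R(C)` containing the infinite-dimensional closed subspaces `{0} × X`
resp. `X × {0}`, while the composition `D₂ ∘ D₁ = (u,v) ↦ (Cu, Cv)` is strictly singular with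
non-closed range `R(C) × R(C)`. -/
theorem composition_crosses_type_divide
    {X : Type*} [NormedAddCommGroup X] [NormedSpace ℝ X] [CompleteSpace X]
    (hX : ¬ FiniteDimensional ℝ X)
    (C : X →L[ℝ] X) (hss : StrictlySingular C) (hncl : ¬ IsClosed (Set.range C))
    (D₁ D₂ : X × X →L[ℝ] X × X)
    (hD₁ : ∀ u v : X, D₁ (u, v) = (C u, v)) (hD₂ : ∀ u v : X, D₂ (u, v) = (u, C v)) :
    (¬ StrictlySingular D₁ ∧ ¬ StrictlySingular D₂) ∧
    (Set.range D₁ = Set.range C ×ˢ (Set.univ : Set X) ∧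
      Set.range D₂ = (Set.univ : Set X) ×ˢ Set.range C ∧
      ¬ IsClosed (Set.range D₁) ∧ ¬ IsClosed (Set.range D₂)) ∧
    (let M₁ : Submodule ℝ (X × X) := (⊥ : Submodule ℝ X).prod (⊤ : Submodule ℝ X)
     let M₂ : Submodule ℝ (X × X) := (⊤ : Submodule ℝ X).prod (⊥ : Submodule ℝ X)
     (IsClosed (M₁ : Set (X × X)) ∧ ¬ FiniteDimensional ℝ M₁ ∧
        (M₁ : Set (X × X)) ⊆ Set.range D₁) ∧
     (IsClosed (M₂ : Set (X × X)) ∧ ¬ FiniteDimensional ℝ M₂ ∧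
        (M₂ : Set (X × X)) ⊆ Set.range D₂)) ∧
    (StrictlySingular (D₂.comp D₁) ∧
      Set.range (D₂.comp D₁) = Set.range C ×ˢ Set.range C ∧
      ¬ IsClosed (Set.range (D₂.comp D₁))) := by
  exact composition_crosses_type_divide_general hX hX hss hss hncl hncl hD₁ hD₂
end

section
/- Let B : ℓ¹ → ℓ² be the Mazur-type operator B x = Σ_{k=1}^∞ x_k ζ⁽ᵏ⁾, where (ζ⁽ᵏ⁾)_{k∈ℕ} is a sequence of pairwise distinct elements dense in the unit sphere of ℓ². Fix α > 0, and suppose y = λ·ζ⁽ᵏ⁾ for some λ ∈ ℝ and k ∈ ℕ, and additionally ζ⁽ˡ⁾ ≠ −ζ⁽ᵏ⁾ for all l ∈ ℕ with l ≠ k. Then the Tikhonov functional T(x) = (1/2)·‖B x − y‖²_{ℓ²} + α·‖x‖_{ℓ¹} has exactly one minimizer x* on ℓ¹, given by the soft-thresholding formula: x* = 0 if λ ∈ [−α, α]; x* = (λ − α)·e⁽ᵏ⁾ if λ > α; and x* = (λ + α)·e⁽ᵏ⁾ if λ < −α, where e⁽ᵏ⁾ is the k-th standard unit sequence. -/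
/-!
Let `u = s • e⁽ᵏ⁾` be the soft-thresholding element and `p = y - B u` its residual. Completing the
square gives `T x - T u = ½‖B x - B u‖² + (α‖x‖ - ⟪p, B x⟫)` as soon as `⟪p, B u⟫ = α‖u‖`. Here
`p = (l - s) • ζ k` with `|l - s| ≤ α`, so the functional `⟪p, B ·⟫` is bounded by `α` on every
`±e⁽ʲ⁾`, strictly for `j ≠ k`. Hence the second summand is nonnegative, and it vanishes only
for sequences supported at `k`; on those, `B x = B u` leaves only `u`.
-/

open scoped RealInnerProductSpace

section Certificate

variable {E H : Type*} [Norm E] [NormedAddCommGroup H] [InnerProductSpace ℝ H]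

/-- The Tikhonov functional of a forward operator `B` with data `y` and regularization parameter
`α`. The penalty is the norm of the domain, so `E = ℓ¹` gives `ℓ¹`-regularization. -/
noncomputable def tikhonov (B : E → H) (y : H) (α : ℝ) (x : E) : ℝ :=
  (1 / 2 : ℝ) * ‖B x - y‖ ^ 2 + α * ‖x‖

variable {B : E → H} {y : H} {α : ℝ} {u : E}

theorem tikhonov_eq_add_of_inner_residual_eq (hu : ⟪y - B u, B u⟫ = α * ‖u‖) (x : E) :
    tikhonov B y α x =
      tikhonov B y α u + (1 / 2 * ‖B x - B u‖ ^ 2 + (α * ‖x‖ - ⟪y - B u, B x⟫)) := by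
  have expand : ‖B x - y‖ ^ 2 =
      ‖B x - B u‖ ^ 2 - 2 * (⟪y - B u, B x⟫ - ⟪y - B u, B u⟫) + ‖B u - y‖ ^ 2 := by
    rw [← sub_sub_sub_cancel_right (B x) y (B u), norm_sub_sq_real, real_inner_comm,
      inner_sub_right, norm_sub_rev y]
  simp only [tikhonov, expand, hu]
  ring

theorem tikhonov_le_of_inner_residual_le (hu : ⟪y - B u, B u⟫ = α * ‖u‖) {x : E}
    (hx : ⟪y - B u, B x⟫ ≤ α * ‖x‖) : tikhonov B y α u ≤ tikhonov B y α x := by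
  rw [tikhonov_eq_add_of_inner_residual_eq hu x]
  have := sub_nonneg.2 hx
  exact le_add_of_nonneg_right (by positivity)

theorem map_eq_and_inner_residual_eq_of_tikhonov_le (hu : ⟪y - B u, B u⟫ = α * ‖u‖) {x : E}
    (hx : ⟪y - B u, B x⟫ ≤ α * ‖x‖) (hle : tikhonov B y α x ≤ tikhonov B y α u) :
    B x = B u ∧ ⟪y - B u, B x⟫ = α * ‖x‖ := by
  rw [tikhonov_eq_add_of_inner_residual_eq hu x] at hle
  have dist_sq_nonneg := sq_nonneg ‖B x - B u‖
  have dist_sq_eq_zero : ‖B x - B u‖ ^ 2 = 0 := by linarith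
  exact ⟨by simpa [sub_eq_zero] using dist_sq_eq_zero, by linarith⟩

end Certificate

section LpOne

variable {ι : Type*} [DecidableEq ι]

section Family

variable {E : ι → Type*} [∀ i, NormedAddCommGroup (E i)] [∀ i, NormedSpace ℝ (E i)]

theorem hasSum_mul_norm_sub_map_single (f : lp E 1 →L[ℝ] ℝ) (α : ℝ) (x : lp E 1) :
    HasSum (fun i => α * ‖x i‖ - f (lp.single 1 i (x i))) (α * ‖x‖ - f x) := by
  have norm_sum : HasSum (fun i => ‖x i‖) ‖x‖ := by
    simpa using lp.hasSum_norm (p := 1) (by norm_num) x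
  exact (norm_sum.mul_left α).sub ((lp.hasSum_single ENNReal.one_ne_top x).mapL f)

variable {f : lp E 1 →L[ℝ] ℝ} {α : ℝ}

theorem map_le_mul_norm_of_map_single_le (hf : ∀ i a, f (lp.single 1 i a) ≤ α * ‖a‖)
    (x : lp E 1) : f x ≤ α * ‖x‖ :=
  sub_nonneg.1 <| (hasSum_mul_norm_sub_map_single f α x).nonneg fun i => sub_nonneg.2 (hf i (x i))

theorem map_single_eq_mul_norm_of_map_eq (hf : ∀ i a, f (lp.single 1 i a) ≤ α * ‖a‖)
    {x : lp E 1} (hx : f x = α * ‖x‖) (i : ι) : f (lp.single 1 i (x i)) = α * ‖x i‖ := by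
  have gap_sum := hasSum_mul_norm_sub_map_single f α x
  rw [hx, sub_self, hasSum_zero_iff_of_nonneg fun j => sub_nonneg.2 (hf j (x j))] at gap_sum
  exact (sub_eq_zero.1 (congrFun gap_sum i)).symm

end Family

theorem map_single_le_abs_map_single_one_mul_norm (f : lp (fun _ : ι => ℝ) 1 →L[ℝ] ℝ) (i : ι)
    (t : ℝ) : f (lp.single 1 i t) ≤ |f (lp.single 1 i 1)| * ‖t‖ := by
  calc f (lp.single 1 i t) = t * f (lp.single 1 i 1) := by
        rw [← smul_eq_mul t, ← map_smul, ← lp.single_smul, smul_eq_mul, mul_one]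
    _ ≤ |t * f (lp.single 1 i 1)| := le_abs_self _
    _ = |f (lp.single 1 i 1)| * ‖t‖ := by rw [abs_mul, mul_comm, Real.norm_eq_abs]

theorem eq_smul_single_one_of_forall_ne {x : lp (fun _ : ι => ℝ) 1} {k : ι}
    (hx : ∀ i ≠ k, x i = 0) : x = x k • lp.single 1 k (1 : ℝ) := by
  ext i
  by_cases hi : i = k
  · subst hi
    simp
  · simp [hx i hi, hi]

theorem map_single_one_eq_of_forall_eq_tsum {H : Type*} [AddCommMonoid H] [Module ℝ H]
    [TopologicalSpace H] {ζ : ι → H} {B : lp (fun _ : ι => ℝ) 1 → H}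
    (hB : ∀ x, B x = ∑' i, x i • ζ i) (i : ι) : B (lp.single 1 i 1) = ζ i := by
  rw [hB, tsum_eq_single i fun j hj => by simp [hj]]
  simp

variable {f : lp (fun _ : ι => ℝ) 1 →L[ℝ] ℝ} {α : ℝ}

theorem map_le_mul_norm_of_abs_map_single_one_le (hf : ∀ i, |f (lp.single 1 i 1)| ≤ α)
    (x : lp (fun _ : ι => ℝ) 1) : f x ≤ α * ‖x‖ :=
  map_le_mul_norm_of_map_single_le (fun i t =>
    (map_single_le_abs_map_single_one_mul_norm f i t).trans (by gcongr; exact hf i)) x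

theorem apply_eq_zero_of_abs_map_single_one_lt (hf : ∀ i, |f (lp.single 1 i 1)| ≤ α)
    {x : lp (fun _ : ι => ℝ) 1} (hx : f x = α * ‖x‖) {i : ι}
    (hi : |f (lp.single 1 i 1)| < α) : x i = 0 := by
  have map_single_eq : f (lp.single 1 i (x i)) = α * ‖x i‖ :=
    map_single_eq_mul_norm_of_map_eq (fun j t =>
      (map_single_le_abs_map_single_one_mul_norm f j t).trans (by gcongr; exact hf j)) hx i
  have le_smaller : α * ‖x i‖ ≤ |f (lp.single 1 i 1)| * ‖x i‖ :=
    map_single_eq ▸ map_single_le_abs_map_single_one_mul_norm f i (x i)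
  by_contra hne
  exact hi.not_ge (le_of_mul_le_mul_right le_smaller (norm_pos_iff.2 hne))

end LpOne

section SoftThreshold

/-- The scalar soft-thresholding function with threshold `α`, shrinking `l` towards `0` by `α`. -/
noncomputable def softThreshold (α l : ℝ) : ℝ :=
  if α < l then l - α else if l < -α then l + α else 0

theorem abs_sub_softThreshold_le {α : ℝ} (hα : 0 ≤ α) (l : ℝ) : |l - softThreshold α l| ≤ α := by
  unfold softThreshold
  split_ifs <;> rw [abs_le] <;> constructor <;> linarith

theorem sub_softThreshold_mul_softThreshold (α l : ℝ) :
    (l - softThreshold α l) * softThreshold α l = α * |softThreshold α l| := by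
  unfold softThreshold
  split_ifs with hpos hneg
  · rw [abs_of_pos (sub_pos.2 hpos)]
    ring
  · rw [abs_of_neg (by linarith)]
    ring
  · simp

theorem softThreshold_smul {V : Type*} [AddCommGroup V] [Module ℝ V] (α l : ℝ) (v : V) :
    softThreshold α l • v =
      if α < l then (l - α) • v else if l < -α then (l + α) • v else 0 := by
  simp only [softThreshold, ite_smul, zero_smul]

end SoftThreshold

theorem abs_real_inner_lt_one_of_norm_eq_one {H : Type*} [NormedAddCommGroup H]
    [InnerProductSpace ℝ H] {x y : H} (hx : ‖x‖ = 1) (hy : ‖y‖ = 1) (hne : y ≠ x)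
    (hneg : y ≠ -x) : |⟪x, y⟫| < 1 := by
  refine abs_lt.2 ⟨?_, (inner_lt_one_iff_real_of_norm_eq_one hx hy).2 hne.symm⟩
  have := (inner_lt_one_iff_real_of_norm_eq_one ((norm_neg x).trans hx) hy).2 hneg.symm
  rw [inner_neg_left] at this
  linarith

theorem forall_tikhonov_le_iff_eq_smul_single {ι H : Type*} [DecidableEq ι]
    [NormedAddCommGroup H] [InnerProductSpace ℝ H] {B : lp (fun _ : ι => ℝ) 1 →L[ℝ] H} {y : H}
    {α s : ℝ} {k : ι} (hBk : B (lp.single 1 k 1) ≠ 0)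
    (hk : ⟪y - B (s • lp.single 1 k 1), B (s • lp.single 1 k 1)⟫ = α * |s|)
    (hle : |⟪y - B (s • lp.single 1 k 1), B (lp.single 1 k 1)⟫| ≤ α)
    (hlt : ∀ i ≠ k, |⟪y - B (s • lp.single 1 k 1), B (lp.single 1 i 1)⟫| < α)
    (z : lp (fun _ : ι => ℝ) 1) :
    (∀ x, tikhonov B y α z ≤ tikhonov B y α x) ↔ z = s • lp.single 1 k 1 := by
  set u : lp (fun _ : ι => ℝ) 1 := s • lp.single 1 k 1 with hu
  let f : lp (fun _ : ι => ℝ) 1 →L[ℝ] ℝ := innerSL ℝ (y - B u) ∘L B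
  have norm_u : ‖u‖ = |s| := by simp [hu, norm_smul, lp.norm_single]
  have inner_u : ⟪y - B u, B u⟫ = α * ‖u‖ := norm_u ▸ hk
  have f_single_le (i : ι) : |f (lp.single 1 i 1)| ≤ α := by
    rcases eq_or_ne i k with rfl | hi
    · exact hle
    · exact (hlt i hi).le
  have inner_le (x) : ⟪y - B u, B x⟫ ≤ α * ‖x‖ :=
    map_le_mul_norm_of_abs_map_single_one_le f_single_le x
  refine ⟨fun hz => ?_, ?_⟩
  · obtain ⟨map_eq, inner_eq⟩ :=
      map_eq_and_inner_residual_eq_of_tikhonov_le inner_u (inner_le z) (hz u)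
    have z_eq : z = z k • lp.single 1 k 1 := eq_smul_single_one_of_forall_ne fun i hi =>
      apply_eq_zero_of_abs_map_single_one_lt f_single_le inner_eq (hlt i hi)
    rw [z_eq, hu, map_smul, map_smul] at map_eq
    rw [z_eq, smul_left_injective ℝ hBk map_eq]
  · rintro rfl x
    exact tikhonov_le_of_inner_residual_le inner_u (inner_le x)

theorem tikhonov_unique_soft_thresholding_minimizer_general {ι H : Type*} [DecidableEq ι]
    [NormedAddCommGroup H] [InnerProductSpace ℝ H] (B : lp (fun _ : ι => ℝ) 1 →L[ℝ] H) {k : ι}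
    (hk : ‖B (lp.single 1 k 1)‖ = 1)
    (hlt : ∀ i ≠ k, |⟪B (lp.single 1 k 1), B (lp.single 1 i 1)⟫| < 1)
    {α : ℝ} (hα : 0 < α) (l : ℝ) (z : lp (fun _ : ι => ℝ) 1) :
    (∀ x, tikhonov B (l • B (lp.single 1 k 1)) α z ≤ tikhonov B (l • B (lp.single 1 k 1)) α x) ↔
      z = softThreshold α l • lp.single 1 k 1 := by
  have inner_residual (v : H) :
      ⟪l • B (lp.single 1 k 1) - B (softThreshold α l • lp.single 1 k 1), v⟫ =
        (l - softThreshold α l) * ⟪B (lp.single 1 k 1), v⟫ := by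
    rw [map_smul, ← sub_smul, real_inner_smul_left]
  have inner_self : ⟪B (lp.single 1 k 1), B (lp.single 1 k 1)⟫ = 1 :=
    inner_self_eq_one_of_norm_eq_one hk
  have abs_coeff_le : |l - softThreshold α l| ≤ α := abs_sub_softThreshold_le hα.le l
  refine forall_tikhonov_le_iff_eq_smul_single (norm_ne_zero_iff.1 (by simp [hk])) ?_ ?_
    (fun i hi => ?_) z
  · rw [inner_residual, map_smul, real_inner_smul_right, inner_self, mul_one,
      sub_softThreshold_mul_softThreshold]
  · rwa [inner_residual, inner_self, mul_one]
  · rw [inner_residual, abs_mul]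
    exact (mul_le_mul_of_nonneg_right abs_coeff_le (abs_nonneg _)).trans_lt
      (mul_lt_of_lt_one_right hα (hlt i hi))

/-- For the Mazur-type operator `B : ℓ¹ → ℓ²`, `B x = ∑' k, x k • ζ k`, fix
`α > 0` and `y = λ • ζ k` with `ζ l ≠ −ζ k` for all `l ≠ k`. Then the Tikhonov functional
`T(x) = ½‖Bx − y‖² + α‖x‖₁` has exactly one minimizer, the soft-thresholding element:
`0` if `λ ∈ [−α, α]`, `(λ−α) • e⁽ᵏ⁾` if `λ > α`, and `(λ+α) • e⁽ᵏ⁾` if `λ < −α`. -/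
theorem tikhonov_unique_soft_thresholding_minimizer
    (ζ : ℕ → lp (fun _ : ℕ => ℝ) 2) (hdist : Function.Injective ζ)
    (hunit : ∀ k, ‖ζ k‖ = 1)
    (hdense : Metric.sphere (0 : lp (fun _ : ℕ => ℝ) 2) 1 ⊆ closure (Set.range ζ))
    (B : lp (fun _ : ℕ => ℝ) 1 →L[ℝ] lp (fun _ : ℕ => ℝ) 2)
    (hB : ∀ x : lp (fun _ : ℕ => ℝ) 1, B x = ∑' k, x k • ζ k)
    (α : ℝ) (hα : 0 < α) (l : ℝ) (k : ℕ) (y : lp (fun _ : ℕ => ℝ) 2)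
    (hy : y = l • ζ k) (hne : ∀ m : ℕ, m ≠ k → ζ m ≠ -ζ k)
    (T : lp (fun _ : ℕ => ℝ) 1 → ℝ)
    (hT : ∀ x, T x = (1 / 2 : ℝ) * ‖B x - y‖ ^ 2 + α * ‖x‖)
    (xstar : lp (fun _ : ℕ => ℝ) 1)
    (hxstar : xstar = if α < l then (l - α) • lp.single 1 k (1 : ℝ)
      else if l < -α then (l + α) • lp.single 1 k (1 : ℝ) else 0) :
    (∀ x, T xstar ≤ T x) ∧ ∀ z : lp (fun _ : ℕ => ℝ) 1, (∀ x, T z ≤ T x) → z = xstar := by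
  have map_single := map_single_one_eq_of_forall_eq_tsum hB
  obtain rfl : T = tikhonov B y α := funext hT
  have minimizer_iff := tikhonov_unique_soft_thresholding_minimizer_general B (k := k)
    (by rw [map_single, hunit]) (fun m hm => by
      rw [map_single, map_single]
      exact abs_real_inner_lt_one_of_norm_eq_one (hunit k) (hunit m) (hdist.ne hm) (hne m hm)) hα l
  rw [map_single, ← hy, softThreshold_smul, ← hxstar] at minimizer_iff
  exact ⟨(minimizer_iff xstar).2 rfl, fun z => (minimizer_iff z).1⟩
end

section
/- Let B : ℓ¹ → ℓ² be the Mazur-type operator B x = Σ_{k=1}^∞ x_k ζ⁽ᵏ⁾, where (ζ⁽ᵏ⁾)_{k∈ℕ} is a sequence of pairwise distinct elements dense in the unit sphere of ℓ². Fix α > 0 and suppose y = λ·ζ⁽ᵏ⁾ with |λ| > α, and suppose there exists l ∈ ℕ with ζ⁽ˡ⁾ = −ζ⁽ᵏ⁾. Then besides the soft-thresholded minimizer, for each γ ∈ (α − λ, 0) in the case λ > α, the element (γ + λ − α)·e⁽ᵏ⁾ + γ·e⁽ˡ⁾ is a minimizer of the Tikhonov functional T(x) = (1/2)·‖B x − y‖²_{ℓ²}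 + α·‖x‖_{ℓ¹}, and for each γ ∈ (0, −α − λ) in the case λ < −α, the element (γ + λ + α)·e⁽ᵏ⁾ + γ·e⁽ˡ⁾ is a minimizer of T. -/
/-!
If `‖A x‖ ≤ ‖x‖` for all `x`, then `‖x‖ ≥ ‖y‖ - ‖A x - y‖`, and completing the square in
`‖A x - y‖` bounds the Tikhonov functional below by `α‖y‖ - α²/2`. Any `x` with residual at most
`α` and norm at most `‖y‖ - α` attains this bound. For an operator on `ℓ¹` with `‖B e⁽ᵏ⁾‖ = 1`,
`B e⁽ʲ⁾ = -B e⁽ᵏ⁾` and `y = l • B e⁽ᵏ⁾`, the element `a • e⁽ᵏ⁾ + b • e⁽ʲ⁾` has residual norm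
`|a - b - l|` and norm at most `|a| + |b|`, so the same `γ` may be added to both coefficients
without changing either quantity, as long as they keep opposite signs.
-/

section Tikhonov

variable {E F : Type*} [Norm E] [SeminormedAddCommGroup F]

/-- The Tikhonov functional `x ↦ ½‖A x - y‖² + α‖x‖` for the equation `A x = y` with
regularization parameter `α`. The penalty is the norm itself, not its square, and `A` may be any
map. -/
noncomputable def tikhonovFunctional (A : E → F) (y : F) (α : ℝ) (x : E) : ℝ :=
  (1 / 2 : ℝ) * ‖A x - y‖ ^ 2 + α * ‖x‖

theorem le_tikhonovFunctional {A : E → F} {x : E} (hAx : ‖A x‖ ≤ ‖x‖) (y : F) {α : ℝ}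
    (hα : 0 ≤ α) : α * ‖y‖ - α ^ 2 / 2 ≤ tikhonovFunctional A y α x := by
  have norm_lower : ‖y‖ - ‖A x - y‖ ≤ ‖x‖ := by
    linarith [norm_le_insert (A x) y]
  calc α * ‖y‖ - α ^ 2 / 2
      ≤ (1 / 2 : ℝ) * ‖A x - y‖ ^ 2 + α * (‖y‖ - ‖A x - y‖) := by
        linarith [sq_nonneg (‖A x - y‖ - α)]
    _ ≤ tikhonovFunctional A y α x := by
        unfold tikhonovFunctional
        gcongr

theorem tikhonovFunctional_le {A : E → F} {x : E} {y : F} {α : ℝ}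
    (hres : ‖A x - y‖ ≤ α) (hnorm : ‖x‖ ≤ ‖y‖ - α) :
    tikhonovFunctional A y α x ≤ α * ‖y‖ - α ^ 2 / 2 := by
  have hα : 0 ≤ α := (norm_nonneg _).trans hres
  calc tikhonovFunctional A y α x
      ≤ (1 / 2 : ℝ) * α ^ 2 + α * (‖y‖ - α) := by
        unfold tikhonovFunctional
        gcongr
    _ = α * ‖y‖ - α ^ 2 / 2 := by ring

theorem isMinOn_tikhonovFunctional {A : E → F} (hA : ∀ x, ‖A x‖ ≤ ‖x‖) {x : E} {y : F} {α : ℝ}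
    (hres : ‖A x - y‖ ≤ α) (hnorm : ‖x‖ ≤ ‖y‖ - α) :
    IsMinOn (tikhonovFunctional A y α) Set.univ x :=
  isMinOn_univ_iff.2 fun z =>
    (tikhonovFunctional_le hres hnorm).trans
      (le_tikhonovFunctional (hA z) y ((norm_nonneg _).trans hres))

end Tikhonov

section Antipodal

variable {E F : Type*} [SeminormedAddCommGroup E] [NormedSpace ℝ E] [SeminormedAddCommGroup F]
  [NormedSpace ℝ F]

theorem norm_smul_add_smul_le_abs_add_abs {u v : E} (hu : ‖u‖ ≤ 1) (hv : ‖v‖ ≤ 1) (a b : ℝ) :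
    ‖a • u + b • v‖ ≤ |a| + |b| := by
  have norm_smul_le_abs {w : E} (hw : ‖w‖ ≤ 1) (c : ℝ) : ‖c • w‖ ≤ |c| := by
    rw [norm_smul, Real.norm_eq_abs]
    exact mul_le_of_le_one_right (abs_nonneg c) hw
  exact norm_add_le_of_le (norm_smul_le_abs hu a) (norm_smul_le_abs hv b)

theorem isMinOn_tikhonovFunctional_antipodal {B : E →L[ℝ] F} (hB : ‖B‖ ≤ 1) {u v : E}
    (hu : ‖u‖ ≤ 1) (hv : ‖v‖ ≤ 1) (hBu : ‖B u‖ = 1) (hBv : B v = -B u) {l α a b : ℝ}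
    (hres : |a - b - l| ≤ α) (hsum : |a| + |b| ≤ |l| - α) :
    IsMinOn (tikhonovFunctional B (l • B u) α) Set.univ (a • u + b • v) := by
  have norm_smul_image (c : ℝ) : ‖c • B u‖ = |c| := by
    rw [norm_smul, hBu, mul_one, Real.norm_eq_abs]
  have residual_eq : B (a • u + b • v) - l • B u = (a - b - l) • B u := by
    rw [map_add, map_smul, map_smul, hBv]
    module
  refine isMinOn_tikhonovFunctional (fun x => by simpa using B.le_of_opNorm_le hB x) ?_ ?_
  · rwa [residual_eq, norm_smul_image]
  · rw [norm_smul_image]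
    exact (norm_smul_add_smul_le_abs_add_abs hu hv a b).trans hsum

end Antipodal

theorem opNorm_le_of_norm_apply_single_le {𝕜 ι F : Type*} [NontriviallyNormedField 𝕜]
    [DecidableEq ι] {E : ι → Type*} [∀ i, NormedAddCommGroup (E i)] [∀ i, NormedSpace 𝕜 (E i)]
    [SeminormedAddCommGroup F] [NormedSpace 𝕜 F] {B : lp E 1 →L[𝕜] F} {C : ℝ} (hC : 0 ≤ C)
    (hB : ∀ i v, ‖B (lp.single 1 i v)‖ ≤ C * ‖v‖) : ‖B‖ ≤ C := by
  refine B.opNorm_le_bound hC fun x => ?_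
  have hasSum_apply : HasSum (fun i => B (lp.single 1 i (x i))) (B x) :=
    (lp.hasSum_single ENNReal.one_ne_top x).mapL B
  have hasSum_norm : HasSum (fun i => ‖x i‖) ‖x‖ := by
    simpa using lp.hasSum_norm (p := 1) (by norm_num) x
  exact hasSum_apply.norm_le_of_bounded (hasSum_norm.mul_left C) fun i => hB i (x i)

theorem opNorm_le_of_norm_apply_single_one_le {𝕜 ι F : Type*} [NontriviallyNormedField 𝕜]
    [DecidableEq ι] [SeminormedAddCommGroup F] [NormedSpace 𝕜 F]
    {B : lp (fun _ : ι => 𝕜) 1 →L[𝕜] F} {C : ℝ} (hC : 0 ≤ C)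
    (hB : ∀ i, ‖B (lp.single 1 i (1 : 𝕜))‖ ≤ C) : ‖B‖ ≤ C := by
  refine opNorm_le_of_norm_apply_single_le hC fun i c => ?_
  have single_eq : lp.single (E := fun _ : ι => 𝕜) 1 i c = c • lp.single 1 i (1 : 𝕜) := by
    rw [← lp.single_smul, smul_eq_mul, mul_one]
  rw [single_eq, map_smul, norm_smul, mul_comm]
  exact mul_le_mul_of_nonneg_right (hB i) (norm_nonneg c)

theorem tsum_single_one_smul {𝕜 ι F : Type*} [NormedField 𝕜] [DecidableEq ι] [AddCommMonoid F]
    [Module 𝕜 F] [TopologicalSpace F] (p : ENNReal) (ζ : ι → F) (i : ι) :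
    ∑' m, lp.single (E := fun _ : ι => 𝕜) p i (1 : 𝕜) m • ζ m = ζ i := by
  rw [tsum_eq_single i fun m hm => by rw [lp.single_apply_ne _ _ _ hm, zero_smul],
    lp.single_apply_self, one_smul]

theorem tikhonov_additional_minimizers_antipodal_case_general {ι F : Type*} [DecidableEq ι]
    [SeminormedAddCommGroup F] [NormedSpace ℝ F] {B : lp (fun _ : ι => ℝ) 1 →L[ℝ] F}
    (hB : ∀ i, ‖B (lp.single 1 i (1 : ℝ))‖ ≤ 1) {k j : ι}
    (hk : ‖B (lp.single 1 k (1 : ℝ))‖ = 1)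
    (hj : B (lp.single 1 j (1 : ℝ)) = -B (lp.single 1 k (1 : ℝ))) {α : ℝ} (hα : 0 ≤ α) (l : ℝ) :
    (∀ γ ∈ Set.Icc (α - l) 0,
      IsMinOn (tikhonovFunctional B (l • B (lp.single 1 k (1 : ℝ))) α) Set.univ
        ((γ + l - α) • lp.single 1 k (1 : ℝ) + γ • lp.single 1 j (1 : ℝ))) ∧
    (∀ γ ∈ Set.Icc 0 (-α - l),
      IsMinOn (tikhonovFunctional B (l • B (lp.single 1 k (1 : ℝ))) α) Set.univ
        ((γ + l + α) • lp.single 1 k (1 : ℝ) + γ • lp.single 1 j (1 : ℝ))) := by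
  have norm_single_le (i : ι) : ‖lp.single (E := fun _ : ι => ℝ) 1 i (1 : ℝ)‖ ≤ 1 := by
    rw [lp.norm_single zero_lt_one, norm_one]
  have isMinOn_of_abs {a b : ℝ} := isMinOn_tikhonovFunctional_antipodal (l := l) (α := α)
    (a := a) (b := b) (opNorm_le_of_norm_apply_single_one_le zero_le_one hB) (norm_single_le k)
    (norm_single_le j) hk hj
  constructor <;> rintro γ ⟨hγ_lower, hγ_upper⟩ <;> apply isMinOn_of_abs
  · rw [show γ + l - α - γ - l = -α by ring, abs_neg, abs_of_nonneg hα]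
  · rw [abs_of_nonneg (by linarith : 0 ≤ γ + l - α), abs_of_nonpos hγ_upper,
      abs_of_nonneg (by linarith : 0 ≤ l)]
    linarith
  · rw [show γ + l + α - γ - l = α by ring, abs_of_nonneg hα]
  · rw [abs_of_nonpos (by linarith : γ + l + α ≤ 0), abs_of_nonneg hγ_lower,
      abs_of_nonpos (by linarith : l ≤ 0)]
    linarith

/-- For the Mazur-type operator `B : ℓ¹ → ℓ²`, `B x = ∑' k, x k • ζ k`, fix
`α > 0` and `y = λ • ζ k` with `|λ| > α`, and suppose `ζ l = −ζ k` for some `l`. Then besides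
the soft-thresholded minimizer there is a family of further minimizers of the Tikhonov
functional `T(x) = ½‖Bx − y‖² + α‖x‖₁`: for `λ > α` and each `γ ∈ (α − λ, 0)` the element
`(γ + λ − α) • e⁽ᵏ⁾ + γ • e⁽ˡ⁾`, and for `λ < −α` and each `γ ∈ (0, −α − λ)` the element
`(γ + λ + α) • e⁽ᵏ⁾ + γ • e⁽ˡ⁾`. -/
theorem tikhonov_additional_minimizers_antipodal_case
    (ζ : ℕ → lp (fun _ : ℕ => ℝ) 2) (hdist : Function.Injective ζ)
    (hunit : ∀ m, ‖ζ m‖ = 1)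
    (hdense : Metric.sphere (0 : lp (fun _ : ℕ => ℝ) 2) 1 ⊆ closure (Set.range ζ))
    (B : lp (fun _ : ℕ => ℝ) 1 →L[ℝ] lp (fun _ : ℕ => ℝ) 2)
    (hB : ∀ x : lp (fun _ : ℕ => ℝ) 1, B x = ∑' m, x m • ζ m)
    (α : ℝ) (hα : 0 < α) (l : ℝ) (k : ℕ) (y : lp (fun _ : ℕ => ℝ) 2)
    (hy : y = l • ζ k) (hl : α < |l|)
    (j : ℕ) (hj : ζ j = -ζ k)
    (T : lp (fun _ : ℕ => ℝ) 1 → ℝ)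
    (hT : ∀ x, T x = (1 / 2 : ℝ) * ‖B x - y‖ ^ 2 + α * ‖x‖) :
    (α < l → ∀ γ : ℝ, γ ∈ Set.Ioo (α - l) 0 →
      ∀ x, T ((γ + l - α) • lp.single 1 k (1 : ℝ) + γ • lp.single 1 j (1 : ℝ)) ≤ T x) ∧
    (l < -α → ∀ γ : ℝ, γ ∈ Set.Ioo 0 (-α - l) →
      ∀ x, T ((γ + l + α) • lp.single 1 k (1 : ℝ) + γ • lp.single 1 j (1 : ℝ)) ≤ T x) := by
  obtain rfl : ζ = fun m => B (lp.single 1 m (1 : ℝ)) :=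
    funext fun m => ((hB _).trans (tsum_single_one_smul 1 ζ m)).symm
  obtain rfl : T = tikhonovFunctional B y α := funext hT
  subst hy
  obtain ⟨pos_case, neg_case⟩ := tikhonov_additional_minimizers_antipodal_case_general
    (fun i => (hunit i).le) (hunit k) hj hα.le l
  exact ⟨fun _ γ hγ => isMinOn_univ_iff.1 (pos_case γ (Set.Ioo_subset_Icc_self hγ)),
    fun _ γ hγ => isMinOn_univ_iff.1 (neg_case γ (Set.Ioo_subset_Icc_self hγ))⟩
end

section
/- Let Y be a separable real Banach space, let A_Maz : ℓ¹ → Y be a Mazur-type operator A_Maz x = Σ_{k=1}^∞ x_k ζ⁽ᵏ⁾ with (ζ⁽ᵏ⁾)_{k∈ℕ} pairwise distinct and dense in the unit sphere of Y, and let C : Y → Z be a nonzero bounded linear operator into a real Banach space Z. Then the composition A = C ∘ A_Maz : ℓ¹ → Z is not weak*-to-weak sequentially continuous. More precisely, the standard unit sequences e⁽ⁿ⁾ converge weak* to 0 in ℓ¹, but there exists a continuous linear functional η on Z such that η(A e⁽ⁿ⁾) = η(C ζ⁽ⁿ⁾) does not converge to 0 as n → ∞; hence (A e⁽ⁿ⁾)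 does not converge weakly to 0 = A 0 in Z. -/
open Filter

/-- A sequence in `ℓ¹` converges weak* (w.r.t. the predual `c₀`) to `x₀` if all dual pairings
with null sequences converge. -/
def WeakStarConvLp1 (x : ℕ → lp (fun _ : ℕ => ℝ) 1) (x₀ : lp (fun _ : ℕ => ℝ) 1) : Prop :=
  ∀ c : ℕ → ℝ, Tendsto c atTop (nhds 0) →
    Tendsto (fun n => ∑' k, c k * x n k) atTop (nhds (∑' k, c k * x₀ k))

/-- A bounded linear operator `A : ℓ¹ → Z` is weak*-to-weak sequentially continuous if it maps
weak*-convergent sequences to weakly convergent sequences. -/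
def WeakStarToWeakSeqContinuous {Z : Type*} [NormedAddCommGroup Z] [NormedSpace ℝ Z]
    (A : lp (fun _ : ℕ => ℝ) 1 →L[ℝ] Z) : Prop :=
  ∀ (x : ℕ → lp (fun _ : ℕ => ℝ) 1) (x₀ : lp (fun _ : ℕ => ℝ) 1), WeakStarConvLp1 x x₀ →
    ∀ f : Z →L[ℝ] ℝ, Tendsto (fun n => f (A (x n))) atTop (nhds (f (A x₀)))

/-!
The unit sphere of a real normed space of dimension at least two is connected, hence has no isolated
points. Each of its points `u` is therefore an accumulation point of any sequence `ζ` whose range is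
dense in it, so `u` is a limit of `ζ` along a subsequence. Choosing `u` and `η` with `η (C u) ≠ 0`,
we see that `η (C (ζ n))` has the nonzero cluster value `η (C u)`. A sphere containing infinitely
many points forces the dimension to be at least two.
-/

open scoped Topology

section ClusterPoints

variable {ι X X' : Type*} [TopologicalSpace X] [TopologicalSpace X'] {u : ι → X} {x : X}

theorem mapClusterPt_cofinite_of_accPt_range [T1Space X]
    (hx : AccPt x (𝓟 (Set.range u))) : MapClusterPt x cofinite u := by
  refine mapClusterPt_iff_frequently.2 fun s hs => frequently_cofinite_iff_infinite.2 ?_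
  have hinf : (s ∩ Set.range u).Infinite := .of_accPt (hx.nhds_inter hs)
  rw [← Set.image_preimage_eq_inter_range] at hinf
  exact hinf.of_image u

theorem mapClusterPt_cofinite_of_preperfect [T1Space X] {s : Set X} (hs : Preperfect s)
    (hdense : s ⊆ closure (Set.range u)) (hx : x ∈ s) : MapClusterPt x cofinite u := by
  have hacc : x ∈ derivedSet (closure (Set.range u)) :=
    derivedSet_mono s _ hdense (preperfect_iff_subset_derivedSet.1 hs hx)
  rw [derivedSet_closure] at hacc
  exact mapClusterPt_cofinite_of_accPt_range hacc

theorem not_tendsto_comp_of_mapClusterPt [T2Space X'] {F : Filter ι} {f : X → X'} {y : X'}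
    (hx : MapClusterPt x F u) (hf : ContinuousAt f x) (hne : f x ≠ y) :
    ¬ Tendsto (f ∘ u) F (𝓝 y) := fun hlim =>
  clusterPt_iff_not_disjoint.1 (hx.continuousAt_comp hf)
    ((disjoint_nhds_nhds.2 hne).mono_right hlim)

end ClusterPoints

theorem exists_mem_sphere_apply_ne_zero {𝕜 E F : Type*} [RCLike 𝕜] [NormedAddCommGroup E]
    [NormedSpace 𝕜 E] [AddCommGroup F] [Module 𝕜 F] {T : E →ₗ[𝕜] F} (hT : T ≠ 0) :
    ∃ u ∈ Metric.sphere (0 : E) 1, T u ≠ 0 := by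
  obtain ⟨y, hy⟩ := DFunLike.ne_iff.1 hT
  have hy0 : y ≠ 0 := by rintro rfl; exact hy (map_zero T)
  refine ⟨(‖y‖⁻¹ : 𝕜) • y, mem_sphere_zero_iff_norm.2 (norm_smul_inv_norm hy0), ?_⟩
  rw [map_smul]
  exact smul_ne_zero (by simpa using hy0) hy

section Sphere

variable {E : Type*} [NormedAddCommGroup E] [NormedSpace ℝ E]

theorem finite_sphere_of_rank_le_one (h : Module.rank ℝ E ≤ 1) (x : E) (r : ℝ) :
    (Metric.sphere x r).Finite := by
  obtain ⟨v, hv⟩ := rank_le_one_iff.1 h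
  refine (Set.toFinite {x + (r / ‖v‖) • v, x - (r / ‖v‖) • v}).subset fun y hy => ?_
  obtain ⟨t, ht⟩ := hv (y - x)
  obtain rfl : y = x + t • v := by rw [ht, add_sub_cancel]
  rcases eq_or_ne v 0 with rfl | hv0
  · simp
  have hr : |t| = r / ‖v‖ := by
    rw [eq_div_iff (norm_ne_zero_iff.2 hv0)]
    simpa [norm_smul] using hy
  rcases eq_or_eq_neg_of_abs_eq hr with rfl | rfl
  · exact Or.inl rfl
  · right; simp [sub_eq_add_neg]

theorem one_lt_rank_of_infinite_sphere {x : E} {r : ℝ} (h : (Metric.sphere x r).Infinite) :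
    1 < Module.rank ℝ E :=
  lt_of_not_ge fun hrank => h (finite_sphere_of_rank_le_one hrank x r)

theorem nontrivial_sphere [Nontrivial E] (x : E) {r : ℝ} (hr : 0 < r) :
    (Metric.sphere x r).Nontrivial := by
  obtain ⟨v, hv⟩ := NormedSpace.sphere_nonempty (x := (0 : E)).2 hr.le
  have hv0 : v ≠ 0 := ne_zero_of_mem_sphere hr.ne' ⟨v, hv⟩
  have : IsAddTorsionFree E := .of_isTorsionFree ℝ E
  refine ⟨x + v, by simpa using hv, x - v, by simpa using hv, fun h => hv0 ?_⟩
  exact self_eq_neg.1 (add_left_cancel (h.trans (sub_eq_add_neg x v)))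

theorem preperfect_sphere (h : 1 < Module.rank ℝ E) (x : E) {r : ℝ} (hr : 0 < r) :
    Preperfect (Metric.sphere x r) :=
  have : Nontrivial E := rank_pos_iff_nontrivial.1 (zero_lt_one.trans h)
  (isPreconnected_sphere h x r).preperfect_of_nontrivial (nontrivial_sphere x hr)

theorem not_tendsto_apply_of_sphere_subset_closure_range {ι F : Type*}
    [AddCommGroup F] [Module ℝ F] [TopologicalSpace F] [T2Space F] {ζ : ι → E}
    (h : 1 < Module.rank ℝ E) (hdense : Metric.sphere (0 : E) 1 ⊆ closure (Set.range ζ))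
    {g : E →L[ℝ] F} (hg : g ≠ 0) : ¬ Tendsto (fun i => g (ζ i)) cofinite (𝓝 0) := by
  obtain ⟨u, hu, hgu⟩ := exists_mem_sphere_apply_ne_zero (ContinuousLinearMap.coe_injective.ne hg)
  have hcluster : MapClusterPt u cofinite ζ :=
    mapClusterPt_cofinite_of_preperfect (preperfect_sphere h 0 one_pos) hdense hu
  exact not_tendsto_comp_of_mapClusterPt hcluster g.continuous.continuousAt hgu

end Sphere

theorem exists_dual_comp_ne_zero {R E F : Type*} [Ring R] [TopologicalSpace R]
    [AddCommGroup E] [TopologicalSpace E] [Module R E]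
    [AddCommGroup F] [TopologicalSpace F] [Module R F] [SeparatingDual R F]
    {C : E →L[R] F} (hC : C ≠ 0) : ∃ η : F →L[R] R, η.comp C ≠ 0 := by
  obtain ⟨y, hy⟩ := DFunLike.ne_iff.1 hC
  obtain ⟨η, hη⟩ := SeparatingDual.exists_ne_zero (R := R) hy
  exact ⟨η, DFunLike.ne_iff.2 ⟨y, hη⟩⟩

theorem tsum_lp_single_smul {ι R M : Type*} [DecidableEq ι] [NormedRing R] [AddCommMonoid M]
    [TopologicalSpace M] [Module R M] (p : ENNReal) (i : ι) (a : R) (v : ι → M) :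
    ∑' k, (lp.single p i a : lp (fun _ : ι => R) p) k • v k = a • v i := by
  rw [tsum_eq_single i fun k hk => by simp [hk]]
  simp

theorem weakStarConvLp1_single : WeakStarConvLp1 (fun n => lp.single 1 n (1 : ℝ)) 0 := by
  intro c hc
  have hpair (n : ℕ) : ∑' k, c k * (lp.single 1 n (1 : ℝ) : lp (fun _ : ℕ => ℝ) 1) k = c n := by
    simpa only [smul_eq_mul, mul_comm, mul_one] using tsum_lp_single_smul 1 n (1 : ℝ) c
  simpa only [hpair, lp.coeFn_zero, Pi.zero_apply, mul_zero, tsum_zero] using hc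

theorem WeakStarToWeakSeqContinuous.tendsto_single {Z : Type*} [NormedAddCommGroup Z]
    [NormedSpace ℝ Z] {A : lp (fun _ : ℕ => ℝ) 1 →L[ℝ] Z} (hA : WeakStarToWeakSeqContinuous A)
    (η : Z →L[ℝ] ℝ) : Tendsto (fun n => η (A (lp.single 1 n (1 : ℝ)))) atTop (𝓝 0) := by
  simpa using hA _ _ weakStarConvLp1_single η

theorem composition_with_mazur_not_weakStarToWeak_general
    {Y Z : Type*} [NormedAddCommGroup Y] [NormedSpace ℝ Y]
    [NormedAddCommGroup Z] [NormedSpace ℝ Z]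
    (hrank : 1 < Module.rank ℝ Y) (ζ : ℕ → Y)
    (hdense : Metric.sphere (0 : Y) 1 ⊆ closure (Set.range ζ))
    (AMaz : lp (fun _ : ℕ => ℝ) 1 →L[ℝ] Y)
    (hAMaz : ∀ x : lp (fun _ : ℕ => ℝ) 1, AMaz x = ∑' k, x k • ζ k)
    (C : Y →L[ℝ] Z) (hC : C ≠ 0) :
    ¬ WeakStarToWeakSeqContinuous (C.comp AMaz) ∧
    WeakStarConvLp1 (fun n => lp.single 1 n (1 : ℝ)) 0 ∧
    ∃ η : Z →L[ℝ] ℝ,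
      ¬ Tendsto (fun n => η ((C.comp AMaz) (lp.single 1 n (1 : ℝ)))) atTop (𝓝 0) := by
  obtain ⟨η, hηC⟩ := exists_dual_comp_ne_zero hC
  have hsingle (n : ℕ) : AMaz (lp.single 1 n (1 : ℝ)) = ζ n := by
    rw [hAMaz, tsum_lp_single_smul, one_smul]
  have hη : ¬ Tendsto (fun n => η ((C.comp AMaz) (lp.single 1 n (1 : ℝ)))) atTop (𝓝 0) := by
    simpa [hsingle, Nat.cofinite_eq_atTop] using
      not_tendsto_apply_of_sphere_subset_closure_range hrank hdense hηC
  exact ⟨fun hA => hη (hA.tendsto_single η), weakStarConvLp1_single, η, hη⟩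

/-- Compositions `C ∘ A_Maz` of a Mazur-type operator `A_Maz : ℓ¹ → Y` with a
nonzero bounded linear operator `C : Y → Z` are never weak*-to-weak sequentially continuous:
the unit sequences `e⁽ⁿ⁾` converge weak* to `0` in `ℓ¹`, but some functional `η` on `Z`
satisfies that `η (C (A_Maz e⁽ⁿ⁾))` does not tend to `0`. -/
theorem composition_with_mazur_not_weakStarToWeak
    {Y Z : Type*} [NormedAddCommGroup Y] [NormedSpace ℝ Y] [CompleteSpace Y]
    [TopologicalSpace.SeparableSpace Y]
    [NormedAddCommGroup Z] [NormedSpace ℝ Z] [CompleteSpace Z]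
    (ζ : ℕ → Y) (hdist : Function.Injective ζ) (hunit : ∀ k, ‖ζ k‖ = 1)
    (hdense : Metric.sphere (0 : Y) 1 ⊆ closure (Set.range ζ))
    (AMaz : lp (fun _ : ℕ => ℝ) 1 →L[ℝ] Y)
    (hAMaz : ∀ x : lp (fun _ : ℕ => ℝ) 1, AMaz x = ∑' k, x k • ζ k)
    (C : Y →L[ℝ] Z) (hC : C ≠ 0) :
    ¬ WeakStarToWeakSeqContinuous (C.comp AMaz) ∧
    WeakStarConvLp1 (fun n => lp.single 1 n (1 : ℝ)) 0 ∧
    ∃ η : Z →L[ℝ] ℝ,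
      ¬ Tendsto (fun n => η ((C.comp AMaz) (lp.single 1 n (1 : ℝ)))) atTop (nhds 0) := by
  have hsphere : (Metric.sphere (0 : Y) 1).Infinite :=
    Set.infinite_of_injective_forall_mem hdist fun k => mem_sphere_zero_iff_norm.2 (hunit k)
  exact composition_with_mazur_not_weakStarToWeak_general
    (one_lt_rank_of_infinite_sphere hsphere) ζ hdense AMaz hAMaz C hC
end
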